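/- arXiv:2006.06135 — 3 statements merged into one kernel-verified Lean document; each statement's English description precedes it below -/
import Mathlib

section
/- Let M be a real block matrix M = [[A, B], [C, D]], where A is m×n, B is m×q, C is p×n, and D is p×q. Suppose rank(A) = rank(M), and let A† be the Moore–Penrose pseudoinverse of A, i.e., the (unique) n×m real matrix satisfying A A† A = A, A† A A† = A†, (A A†)ᵀ = A A†, and (A† A)ᵀ = A† A. Then D = C A† B. -/
open Matrix

namespace Matrix

variable {K m n p q : Type*} [Field K]

/-- If appending columns `Y` to `X` does not increase the rank, then `Y` factors through `X`. -/
theorem exists_eq_mul_of_rank_fromCols_le [Finite m] [Fintype n] [Fintype q]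
    {X : Matrix m n K} {Y : Matrix m q K} (h : (fromCols X Y).rank ≤ X.rank) :
    ∃ Z : Matrix n q K, Y = X * Z := by
  classical
  have hle : LinearMap.range X.mulVecLin ≤ LinearMap.range (fromCols X Y).mulVecLin := by
    rintro _ ⟨v, rfl⟩
    exact ⟨Sum.elim v 0, by simp [fromCols_mulVec]⟩
  have heq := Submodule.eq_of_le_of_finrank_le hle h
  have hcol (j : q) : ∃ z : n → K, X *ᵥ z = Y.col j := by
    have hmem : Y.col j ∈ LinearMap.range (fromCols X Y).mulVecLin :=
      ⟨Pi.single (Sum.inr j) 1, by ext i; simp⟩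
    rwa [← heq] at hmem
  choose z hz using hcol
  refine ⟨of fun i j => z j i, ?_⟩
  ext i j
  exact (congrFun (hz j) i).symm

/-- If appending rows `Y` to `X` does not increase the rank, then `Y` factors through `X`. -/
theorem exists_eq_mul_of_rank_fromRows_le [Fintype m] [Fintype n] [Fintype p]
    {X : Matrix m n K} {Y : Matrix p n K} (h : (fromRows X Y).rank ≤ X.rank) :
    ∃ W : Matrix p m K, Y = W * X := by
  rw [← rank_transpose, ← rank_transpose X, transpose_fromRows] at h
  obtain ⟨Z, hZ⟩ := exists_eq_mul_of_rank_fromCols_le h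
  exact ⟨Zᵀ, by rw [← transpose_transpose Y, hZ, transpose_mul, transpose_transpose]⟩

/-- If a block matrix has the same rank as its upper left block `A`, then its lower right block
is determined by the others through any inner inverse `G` of `A`. -/
theorem eq_mul_mul_of_rank_fromBlocks_le [Fintype m] [Fintype n] [Fintype p] [Fintype q]
    {A : Matrix m n K} {B : Matrix m q K} {C : Matrix p n K} {D : Matrix p q K}
    {G : Matrix n m K} (hG : A * G * A = A) (h : (fromBlocks A B C D).rank ≤ A.rank) :
    D = C * G * B := by
  have hA : A.rank ≤ (fromRows A C).rank :=
    rank_submatrix_le (fromRows A C) Sum.inl id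
  have hAC : (fromRows A C).rank ≤ (fromBlocks A B C D).rank := by
    rw [← fromCols_fromRows_eq_fromBlocks]
    exact rank_submatrix_le (fromCols (fromRows A C) (fromRows B D)) id Sum.inl
  obtain ⟨W, rfl⟩ := exists_eq_mul_of_rank_fromRows_le (hAC.trans h)
  rw [← fromCols_fromRows_eq_fromBlocks] at h
  obtain ⟨Z, hZ⟩ := exists_eq_mul_of_rank_fromCols_le (h.trans hA)
  rw [fromRows_mul, fromRows_ext_iff] at hZ
  obtain ⟨rfl, rfl⟩ := hZ
  calc W * A * Z = W * (A * G * A) * Z := by rw [hG]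
    _ = W * A * G * (A * Z) := by simp only [Matrix.mul_assoc]

end Matrix

/-- Schur-complement identity: if `M = [[A, B], [C, D]]` with `rank(A) = rank(M)` and
`A†` is the Moore–Penrose pseudoinverse of `A` (characterized by the four Penrose
equations), then `D = C A† B`. -/
theorem stmt9 (m n p q : ℕ)
    (A : Matrix (Fin m) (Fin n) ℝ) (B : Matrix (Fin m) (Fin q) ℝ)
    (C : Matrix (Fin p) (Fin n) ℝ) (D : Matrix (Fin p) (Fin q) ℝ)
    (Adag : Matrix (Fin n) (Fin m) ℝ)
    (h1 : A * Adag * A = A) (h2 : Adag * A * Adag = Adag)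
    (h3 : (A * Adag)ᵀ = A * Adag) (h4 : (Adag * A)ᵀ = Adag * A)
    (hrank : (Matrix.fromBlocks A B C D).rank = A.rank) :
    D = C * Adag * B := by
  exact eq_mul_mul_of_rank_fromBlocks_le h1 hrank.le
end

section
/- Let S and A be finite nonempty sets and let Q* : S×A → ℝ satisfy Q*(s,a) = f(s)g(a) for some f : S → ℝ and g : A → ℝ, with 0 < V_min ≤ Q*(s,a) ≤ V_max for all (s,a) ∈ S×A. Fix anchor elements s# ∈ S and a# ∈ A, and let Ω = {(s,a) ∈ S×A : s = s# or a = a#}. Suppose Q̂ : S×A → ℝ satisfies max_{(s,a)∈Ω} |Q̂(s,a) − Q*(s,a)| ≤ ε for some ε ≤ V_min/2. Define Q̄(s,a) = Q̂(s,a#) Q̂(s#,a) / Q̂(s#,a#) for all (s,a) ∈ S×A. Then max_{(s,a)∈S×A} |Q̄(s,a) − Q*(s,a)| ≤ 7 (V_max/V_min) ε. -/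
/-- Perturbing the factors of `x * y = q * z` by at most `ε` in each of `x`, `y`, `z` moves the
residual `x * y - q * z` by at most `ε * (x + y + q + ε)`. -/
theorem abs_mul_sub_mul_le_of_mul_eq_mul {x y z q x' y' z' ε : ℝ} (hx : 0 ≤ x) (hy : 0 ≤ y)
    (hq : 0 ≤ q) (h : x * y = q * z) (hx' : |x' - x| ≤ ε) (hy' : |y' - y| ≤ ε)
    (hz' : |z' - z| ≤ ε) : |x' * y' - q * z'| ≤ ε * (x + y + q + ε) := by
  have hε : 0 ≤ ε := (abs_nonneg _).trans hx'
  have hsplit : x' * y' - q * z' =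
      x * (y' - y) + y * (x' - x) + (x' - x) * (y' - y) - q * (z' - z) := by
    linear_combination h
  calc |x' * y' - q * z'|
      ≤ |x * (y' - y)| + |y * (x' - x)| + |(x' - x) * (y' - y)| + |q * (z' - z)| := by
        rw [hsplit]
        exact (abs_sub _ _).trans (by gcongr; exact abs_add_three _ _ _)
    _ = x * |y' - y| + y * |x' - x| + |x' - x| * |y' - y| + q * |z' - z| := by
        simp only [abs_mul, abs_of_nonneg hx, abs_of_nonneg hy, abs_of_nonneg hq]
    _ ≤ x * ε + y * ε + ε * ε + q * ε := by gcongr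
    _ = ε * (x + y + q + ε) := by ring

/-- Entrywise guarantee for rank-1 matrix estimation with anchor row and column. -/
theorem stmt10 {S A : Type*} [Fintype S] [Fintype A] [Nonempty S] [Nonempty A]
    (Qstar : S → A → ℝ) (f : S → ℝ) (g : A → ℝ)
    (hprod : ∀ s a, Qstar s a = f s * g a)
    (V_min V_max : ℝ) (hV_min : 0 < V_min)
    (hbdd : ∀ s a, V_min ≤ Qstar s a ∧ Qstar s a ≤ V_max)
    (ssharp : S) (asharp : A)
    (Qhat : S → A → ℝ) (ε : ℝ) (hε : ε ≤ V_min / 2)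
    (hnoise : ∀ s a, (s = ssharp ∨ a = asharp) → |Qhat s a - Qstar s a| ≤ ε)
    (Qbar : S → A → ℝ)
    (hQbar : ∀ s a, Qbar s a = Qhat s asharp * Qhat ssharp a / Qhat ssharp asharp) :
    ∀ s a, |Qbar s a - Qstar s a| ≤ 7 * (V_max / V_min) * ε := by
  intro s a
  obtain ⟨hx, hx'⟩ := hbdd s asharp
  obtain ⟨hy, hy'⟩ := hbdd ssharp a
  obtain ⟨hq, hq'⟩ := hbdd s a
  have hz := (hbdd ssharp asharp).1
  have dz := hnoise ssharp asharp (Or.inl rfl)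
  have hε0 : 0 ≤ ε := (abs_nonneg _).trans dz
  have hzhat : V_min / 2 ≤ Qhat ssharp asharp := by linarith [(abs_le.mp dz).1]
  have hzpos : 0 < Qhat ssharp asharp := by linarith
  have hrank : Qstar s asharp * Qstar ssharp a = Qstar s a * Qstar ssharp asharp := by
    simp only [hprod]
    ring
  have hV_max : 0 < V_max := by linarith
  rw [hQbar, div_sub' hzpos.ne', abs_div, abs_of_pos hzpos, div_le_iff₀ hzpos,
    mul_comm (Qhat ssharp asharp)]
  calc |Qhat s asharp * Qhat ssharp a - Qstar s a * Qhat ssharp asharp|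
      ≤ ε * (Qstar s asharp + Qstar ssharp a + Qstar s a + ε) :=
        abs_mul_sub_mul_le_of_mul_eq_mul (by linarith) (by linarith) (by linarith) hrank
          (hnoise s asharp (Or.inr rfl)) (hnoise ssharp a (Or.inl rfl)) dz
    _ ≤ ε * (7 / 2 * V_max) := by
        gcongr
        linarith
    _ = 7 * (V_max / V_min) * ε * (V_min / 2) := by
        field_simp
    _ ≤ 7 * (V_max / V_min) * ε * Qhat ssharp asharp := by gcongr
end

section
/- Let A be a real m×n matrix and B a real n×m matrix. Then |Tr(AB)| ≤ √(rank(B)) · ‖A‖_op · ‖B‖_F, where Tr denotes the trace, ‖A‖_op is the operator norm of A induced by Euclidean norms, and ‖B‖_F = (∑_{i,j} B_{ij}²)^{1/2} is the Frobenius norm. -/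
open Matrix

/-- The operator norm of a real matrix, induced by the Euclidean norms. -/
noncomputable def matOpNorm {m n : ℕ} (M : Matrix (Fin m) (Fin n) ℝ) : ℝ :=
  ‖LinearMap.toContinuousLinearMap (Matrix.toEuclideanLin M)‖

/-- Expansion of the trace of `A * B` along an orthonormal basis of the range of `B`. -/
lemma trace_mul_eq_sum_orthonormalBasis_range {m n : ℕ} (A : Matrix (Fin m) (Fin n) ℝ)
    (B : Matrix (Fin n) (Fin m) ℝ) {ι : Type*} [Fintype ι]
    (u : OrthonormalBasis ι ℝ (LinearMap.range (Matrix.toEuclideanLin B))) :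
    (A * B).trace = ∑ k, ∑ j, inner ℝ (u k)
      ((Matrix.toEuclideanLin B).rangeRestrict (EuclideanSpace.single j 1)) *
        Matrix.toEuclideanLin A (u k) j := by
  rw [Finset.sum_comm, Matrix.trace]
  refine Finset.sum_congr rfl fun j _ => ?_
  set w := (Matrix.toEuclideanLin B).rangeRestrict (EuclideanSpace.single j 1) with hw
  have hA : Matrix.toEuclideanLin A (w : EuclideanSpace ℝ (Fin n)) j = (A * B).diag j := by
    simp [hw, Matrix.toLpLin_apply, Matrix.mul_apply, Matrix.mulVec, dotProduct]
  have hexp : (w : EuclideanSpace ℝ (Fin n)) =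
      ∑ k, inner ℝ (u k) w • (u k : EuclideanSpace ℝ (Fin n)) := by
    conv_lhs => rw [← u.sum_repr' w]
    simp
  rw [← hA]
  conv_lhs => rw [hexp]
  simp

/-- The coefficients of the columns of `B` in an orthonormal basis of the range of `B` have the
same sum of squares as the entries of `B`. -/
lemma sum_sq_inner_orthonormalBasis_range {m n : ℕ} (B : Matrix (Fin n) (Fin m) ℝ)
    {ι : Type*} [Fintype ι]
    (u : OrthonormalBasis ι ℝ (LinearMap.range (Matrix.toEuclideanLin B))) :
    ∑ k, ∑ j, inner ℝ (u k)
      ((Matrix.toEuclideanLin B).rangeRestrict (EuclideanSpace.single j 1)) ^ 2 =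
        ∑ i, ∑ j, B i j ^ 2 := by
  rw [Finset.sum_comm, Finset.sum_comm (f := fun i j => B i j ^ 2)]
  refine Finset.sum_congr rfl fun j _ => ?_
  have h := u.sum_sq_norm_inner_right
    ((Matrix.toEuclideanLin B).rangeRestrict (EuclideanSpace.single j 1))
  simp only [Real.norm_eq_abs, sq_abs] at h
  rw [h, Submodule.coe_norm, EuclideanSpace.norm_sq_eq]
  simp [Matrix.toLpLin_apply]

/-- Trace inequality: `|Tr(AB)| ≤ √(rank B) ‖A‖_op ‖B‖_F`. -/
theorem stmt14 (m n : ℕ) (A : Matrix (Fin m) (Fin n) ℝ) (B : Matrix (Fin n) (Fin m) ℝ) :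
    |(A * B).trace| ≤ Real.sqrt (B.rank : ℝ) * matOpNorm A *
      Real.sqrt (∑ i, ∑ j, B i j ^ 2) := by
  have hrank : B.rank = Module.finrank ℝ (LinearMap.range (Matrix.toEuclideanLin B)) := by
    rw [Matrix.toEuclideanLin_eq_toLin_orthonormal]
    exact B.rank_eq_finrank_range_toLin _ _
  let u := stdOrthonormalBasis ℝ (LinearMap.range (Matrix.toEuclideanLin B))
  have hnonneg : 0 ≤ matOpNorm A := norm_nonneg _
  have hAu (k) : ∑ j, Matrix.toEuclideanLin A (u k) j ^ 2 ≤ matOpNorm A ^ 2 := by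
    have h := (LinearMap.toContinuousLinearMap (Matrix.toEuclideanLin A)).le_opNorm (u k)
    rw [← Submodule.coe_norm, u.norm_eq_one, mul_one] at h
    have h2 := pow_le_pow_left₀ (norm_nonneg _) h 2
    rw [EuclideanSpace.norm_sq_eq] at h2
    simpa [matOpNorm] using h2
  rw [trace_mul_eq_sum_orthonormalBasis_range A B u,
    ← sum_sq_inner_orthonormalBasis_range B u, hrank]
  simp only [← Fintype.sum_prod_type']
  rw [← Real.sqrt_sq hnonneg, ← Real.sqrt_mul (by positivity), ← Real.sqrt_mul (by positivity)]
  refine Real.abs_le_sqrt ((Finset.sum_mul_sq_le_sq_mul_sq _ _ _).trans ?_)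
  rw [mul_comm]
  gcongr
  rw [Fintype.sum_prod_type]
  exact (Finset.sum_le_sum fun k _ => hAu k).trans (by simp)
end
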